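/- arXiv:2604.01875 — 2 statements merged into one kernel-verified Lean document; each statement's English description precedes it below -/
import Mathlib

section
/- Let (M,d) be a uniformly discrete pointed metric space with base point 0. Then for every sequence (μ_n) of finitely supported functions μ_n : M → ℝ with sup_n ‖μ_n‖ < ∞ (free norm), one has ca(μ_n) ≤ 3·de(μ_n). (Since finitely supported elements are dense in the Lipschitz-free space F(M) and both quantities are continuous under uniform norm perturbation of the sequence, this is equivalent to F(M) being 3-Schur.) -/
open scoped BigOperators

/-- The free norm of a finitely supported function `μ : M → ℝ` over a pointed metric
space `(M, z)`: the supremum of the pairings `∑ x, μ x * f x` over all `1`-Lipschitz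
functions `f : M → ℝ` vanishing at the base point `z`. -/
noncomputable def freeNorm {M : Type*} [MetricSpace M] (z : M) (μ : M →₀ ℝ) : ℝ :=
  sSup {s | ∃ f : M → ℝ, f z = 0 ∧ LipschitzWith 1 f ∧ s = ∑ x ∈ μ.support, μ x * f x}

/-- `ca(μ_n) = inf_n sup {‖μ_k - μ_l‖ : k, l ≥ n}` computed with the free norm. -/
noncomputable def seqCa {M : Type*} [MetricSpace M] (z : M) (μ : ℕ → M →₀ ℝ) : ℝ :=
  sInf {t | ∃ n : ℕ, t = sSup {s | ∃ k, n ≤ k ∧ ∃ l, n ≤ l ∧ s = freeNorm z (μ k - μ l)}}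

/-- `de(μ_n) = sup_f inf_n sup {|⟨μ_k - μ_l, f⟩| : k, l ≥ n}` over `1`-Lipschitz `f`
vanishing at the base point. -/
noncomputable def seqDe {M : Type*} [MetricSpace M] (z : M) (μ : ℕ → M →₀ ℝ) : ℝ :=
  sSup {t | ∃ f : M → ℝ, f z = 0 ∧ LipschitzWith 1 f ∧
    t = sInf {u | ∃ n : ℕ, u = sSup {s | ∃ k, n ≤ k ∧ ∃ l, n ≤ l ∧
      s = |∑ x ∈ (μ k - μ l).support, (μ k - μ l) x * f x|}}}


noncomputable def pr {M : Type*} (ν : M →₀ ℝ) (f : M → ℝ) : ℝ := ∑ x ∈ ν.support, ν x * f x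

def Kf {M : Type*} [MetricSpace M] (z : M) (L : ℝ) (f : M → ℝ) : Prop :=
  f z = 0 ∧ ∀ x y, |f x - f y| ≤ L * dist x y

def badSet {M : Type*} [MetricSpace M] (ε : ℝ) (S S' : Finset M) : Set M :=
  {x | (1 + ε) * Metric.infDist x (S' : Set M) < Metric.infDist x (S : Set M)}

lemma Kf.lip {M : Type*} [MetricSpace M] {z : M} {f : M → ℝ} (h : Kf z 1 f) : LipschitzWith 1 f :=
  LipschitzWith.of_dist_le_mul (fun x y => by simpa [Real.dist_eq] using h.2 x y)

lemma Kf.of_lip {M : Type*} [MetricSpace M] {z : M} {f : M → ℝ} (h0 : f z = 0)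
    (h : LipschitzWith 1 f) : Kf z 1 f :=
  ⟨h0, fun x y => by simpa [Real.dist_eq] using h.dist_le_mul x y⟩

lemma Kf.smul {M : Type*} [MetricSpace M] {z : M} {f : M → ℝ} {L : ℝ} (h : Kf z L f) (a : ℝ) :
    Kf z (|a| * L) (fun x => a * f x) := by
  refine ⟨by simp [h.1], fun x y => ?_⟩
  rw [← mul_sub, abs_mul, mul_assoc]
  exact mul_le_mul_of_nonneg_left (h.2 x y) (abs_nonneg _)

lemma pr_smul {M : Type*} (ν : M →₀ ℝ) (f : M → ℝ) (a : ℝ) :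
    pr ν (fun x => a * f x) = a * pr ν f := by
  unfold pr; rw [Finset.mul_sum]; exact Finset.sum_congr rfl (fun x _ => by ring)

lemma pr_le_of_Kf {M : Type*} [MetricSpace M] {z : M} {ν : M →₀ ℝ} {C : ℝ}
    (hC : ∀ f, Kf z 1 f → pr ν f ≤ C) {L : ℝ} (hL : 0 < L) {f : M → ℝ} (hf : Kf z L f) :
    pr ν f ≤ L * C := by
  have h := hf.smul L⁻¹
  rw [abs_of_pos (inv_pos.2 hL), inv_mul_cancel₀ hL.ne'] at h
  have h2 := hC _ h
  rw [pr_smul, inv_mul_le_iff₀ hL] at h2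
  exact h2

lemma mass_bound {M : Type*} [MetricSpace M] {z : M} {θ : ℝ} (hθ : 0 < θ)
    (hd : ∀ x y : M, x ≠ y → θ ≤ dist x y) {ν : M →₀ ℝ} (hz : ν z = 0) {C : ℝ}
    (hC : ∀ f, Kf z 1 f → pr ν f ≤ C) : ∑ x ∈ ν.support, |ν x| ≤ 2 * C / θ := by
  have hK : Kf z 1 (fun x => θ / 2 * SignType.sign (ν x)) := by
    refine ⟨by simp [hz], fun x y => ?_⟩
    by_cases hxy : x = y
    · subst hxy; simp
    have h1 := hd x y hxy
    have key : ∀ t : ℝ, |((SignType.sign t : SignType) : ℝ)| ≤ 1 := by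
      intro t
      rcases lt_trichotomy t 0 with h | h | h <;> simp [h]
    have := key (ν x)
    have := key (ν y)
    rw [← mul_sub, abs_mul, abs_of_pos (by positivity : 0 < θ/2)]
    have : |((SignType.sign (ν x) : SignType) : ℝ) - ((SignType.sign (ν y) : SignType) : ℝ)| ≤ 2 :=
      (abs_sub _ _).trans (by linarith)
    nlinarith
  have h := hC _ hK
  rw [pr_smul] at h
  have e : pr ν (fun x => ((SignType.sign (ν x) : SignType) : ℝ)) = ∑ x ∈ ν.support, |ν x| := by
    unfold pr
    refine Finset.sum_congr rfl (fun x _ => ?_)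
    exact self_mul_sign _
  rw [e] at h
  rw [le_div_iff₀ hθ]; linarith

lemma exists_nearest {M : Type*} [MetricSpace M] {z : M} (S : Finset M) (hz : z ∈ S) (x : M) :
    ∃ s ∈ S, Metric.infDist x (S : Set M) = dist x s := by
  obtain ⟨s, hs, h⟩ := S.finite_toSet.isCompact.exists_infDist_eq_dist ⟨z, hz⟩ x
  exact ⟨s, hs, h⟩

open Classical in
lemma lemA {M : Type*} [MetricSpace M] {z : M} {θ : ℝ} (hθ : 0 < θ)
    (hd : ∀ x y : M, x ≠ y → θ ≤ dist x y) (U : Ultrafilter ℕ) (ν : ℕ → M →₀ ℝ) {C1 : ℝ}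
    (hm : ∀ j, ∑ x ∈ (ν j).support, |ν j x| ≤ C1) {ε : ℝ} (hε : 0 < ε) {D : ℝ} (hD : 0 ≤ D)
    {τ : ℝ} (hτ : 0 < τ) (S0 : Finset M) (hz : z ∈ S0) :
    ∃ S, S0 ⊆ S ∧ ∀ S', S ⊆ S' → ∀ᶠ j in (U : Filter ℕ),
      ∑ x ∈ (ν j).support with (Metric.infDist x (S : Set M) ≤ D ∧ x ∈ badSet ε S S'), |ν j x| ≤ τ := by
  by_contra hcon
  push Not at hcon
  choose! g hg1 hg2 using hcon
  let X : ℕ → Finset M := fun n => g^[n] S0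
  have hXs : ∀ n, X (n+1) = g (X n) := fun n => Function.iterate_succ_apply' g n S0
  have hX0 : ∀ n, S0 ⊆ X n := by
    intro n
    induction n with
    | zero => exact Finset.Subset.refl _
    | succ n ih => rw [hXs]; exact ih.trans (hg1 _ ih)
  set κ : ℝ := θ * ε / (1 + ε) with hκ
  have hκ0 : 0 < κ := by positivity
  obtain ⟨T, hT⟩ := exists_nat_gt (C1 * D / (κ * τ))
  rw [div_lt_iff₀ (by positivity)] at hT
  have hev : ∀ᶠ j in (U : Filter ℕ), ∀ i ∈ Finset.range T,
      τ < ∑ x ∈ (ν j).support with (Metric.infDist x (X i : Set M) ≤ D ∧ x ∈ badSet ε (X i) (X (i+1))), |ν j x| := by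
    rw [Filter.eventually_all_finset]
    intro i _
    have := hg2 (X i) (hX0 i)
    rw [← hXs] at this
    exact this
  obtain ⟨j, hj⟩ := hev.exists
  let Φ : ℕ → ℝ := fun i => ∑ x ∈ (ν j).support, |ν j x| * min (Metric.infDist x (X i : Set M)) D
  have hstep : ∀ i ∈ Finset.range T, κ * τ ≤ Φ i - Φ (i+1) := by
    intro i hi
    have h1 := hj i hi
    have h2 : κ * ∑ x ∈ (ν j).support with (Metric.infDist x (X i : Set M) ≤ D ∧ x ∈ badSet ε (X i) (X (i+1))), |ν j x| ≤ Φ i - Φ (i+1) := by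
      rw [Finset.sum_filter, Finset.mul_sum, ← Finset.sum_sub_distrib]
      refine Finset.sum_le_sum (fun x _ => ?_)
      rw [← mul_sub]
      have hle : Metric.infDist x (X (i+1) : Set M) ≤ Metric.infDist x (X i : Set M) := by
        refine Metric.infDist_le_infDist_of_subset ?_ ⟨z, hX0 i hz⟩
        rw [hXs]; exact_mod_cast hg1 _ (hX0 i)
      have hnn : 0 ≤ Metric.infDist x (X (i+1) : Set M) := Metric.infDist_nonneg
      split_ifs with hb
      · obtain ⟨hb1, hb2⟩ := hb
        have hb2' : (1 + ε) * Metric.infDist x (X (i+1) : Set M) < Metric.infDist x (X i : Set M) := hb2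
        obtain ⟨s, hs, hs'⟩ := exists_nearest (X i) (hX0 i hz) x
        rw [min_eq_left hb1, min_eq_left (hle.trans hb1), mul_comm κ]
        refine mul_le_mul_of_nonneg_left ?_ (abs_nonneg _)
        have hpos : 0 < Metric.infDist x (X i : Set M) := by
          refine lt_of_le_of_lt ?_ hb2'
          positivity
        have hθr : θ ≤ Metric.infDist x (X i : Set M) := by
          rw [hs']; apply hd; rintro rfl; rw [hs', dist_self] at hpos; exact lt_irrefl _ hpos
        rw [hκ, div_le_iff₀ (by positivity)]
        nlinarith
      · rw [mul_zero]
        exact mul_nonneg (abs_nonneg _) (sub_nonneg.2 (min_le_min_right _ hle))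
    exact (mul_le_mul_of_nonneg_left h1.le hκ0.le).trans h2
  have hsum := Finset.sum_le_sum hstep
  rw [Finset.sum_range_sub', Finset.sum_const, Finset.card_range, nsmul_eq_mul] at hsum
  have h0 : Φ 0 ≤ C1 * D := by
    refine le_trans (Finset.sum_le_sum (g := fun x => |ν j x| * D) fun x _ =>
      mul_le_mul_of_nonneg_left (min_le_right _ _) (abs_nonneg _)) ?_
    rw [← Finset.sum_mul]
    exact mul_le_mul_of_nonneg_right (hm j) hD
  have hT0 : 0 ≤ Φ T := Finset.sum_nonneg fun x _ =>
    mul_nonneg (abs_nonneg _) (le_min Metric.infDist_nonneg hD)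
  linarith

lemma extLem {M : Type*} [MetricSpace M] (Y : Set M) (hY : Y.Nonempty) (g κ : M → ℝ) (L : ℝ)
    (hκ : ∀ y ∈ Y, 0 ≤ κ y ∧ κ y ≤ L)
    (hg : ∀ y ∈ Y, ∀ y' ∈ Y, |g y - g y'| ≤ κ y * dist y y') :
    ∃ f : M → ℝ, (∀ x y, |f x - f y| ≤ L * dist x y) ∧ (∀ y ∈ Y, f y = g y) ∧
      ∀ y ∈ Y, ∀ x, |f x - g y| ≤ κ y * dist x y := by
  have : Nonempty Y := hY.to_subtype
  have key : ∀ x, ∀ y ∈ Y, ∀ y' ∈ Y, g y - κ y * dist x y ≤ g y' + κ y' * dist x y' := by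
    intro x y hy y' hy'
    have h1 := le_of_abs_le (hg y hy y' hy')
    have h2 := le_of_abs_le (by simpa [abs_sub_comm, dist_comm] using hg y' hy' y hy :
      |g y - g y'| ≤ κ y' * dist y y')
    have h3 : dist y y' ≤ dist x y + dist x y' := dist_triangle_left _ _ _
    have h4 := (hκ y hy).1
    have h5 := (hκ y' hy').1
    have h6 : 0 ≤ dist x y := dist_nonneg
    have h7 : 0 ≤ dist x y' := dist_nonneg
    rcases le_total (κ y) (κ y') with h | h
    · nlinarith [mul_le_mul_of_nonneg_left h3 h4, mul_le_mul_of_nonneg_right h h7]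
    · nlinarith [mul_le_mul_of_nonneg_left h3 h5, mul_le_mul_of_nonneg_right h h6]
  let f : M → ℝ := fun x => ⨅ y : Y, (g y + κ y * dist x y)
  have hb : ∀ x : M, BddBelow (Set.range fun y : Y => g y + κ y * dist x y) := by
    intro x
    obtain ⟨y0, h0⟩ := hY
    refine ⟨g y0 - κ y0 * dist x y0, ?_⟩
    rintro _ ⟨y, rfl⟩
    exact key x y0 h0 y y.2
  have hub : ∀ y ∈ Y, ∀ x, f x ≤ g y + κ y * dist x y := fun y hy x => ciInf_le (hb x) ⟨y, hy⟩
  have hlb : ∀ y ∈ Y, ∀ x, g y - κ y * dist x y ≤ f x := fun y hy x =>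
    le_ciInf fun y' => key x y hy y' y'.2
  have hL : ∀ x y, f x - f y ≤ L * dist x y := by
    intro x y
    rw [sub_le_comm]
    refine le_ciInf fun w => ?_
    have h1 := hub w w.2 x
    have h2 := hκ w w.2
    have h3 : dist x w ≤ dist x y + dist y w := dist_triangle _ _ _
    have h6 : 0 ≤ dist x y := dist_nonneg
    nlinarith [mul_le_mul_of_nonneg_left h3 h2.1, mul_le_mul_of_nonneg_right h2.2 h6]
  refine ⟨f, fun x y => abs_le.2 ⟨?_, hL x y⟩, fun y hy => ?_, fun y hy x => abs_le.2 ⟨?_, ?_⟩⟩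
  · have := hL y x
    rw [dist_comm] at this; linarith
  · have h1 := hub y hy y
    have h2 := hlb y hy y
    simp at h1 h2
    exact le_antisymm h1 h2
  · linarith [hlb y hy x]
  · linarith [hub y hy x]

open Classical in
lemma lemB {M : Type*} [MetricSpace M] {z : M} {θ : ℝ} (hθ : 0 < θ)
    (hd : ∀ x y : M, x ≠ y → θ ≤ dist x y) (U : Ultrafilter ℕ) (ν : ℕ → M →₀ ℝ)
    (hνz : ∀ j, ν j z = 0) {C : ℝ}
    (hC : ∀ j f, Kf z 1 f → pr (ν j) f ≤ C) {ε : ℝ} (hε : 0 < ε) {η : ℝ} (hη : 0 < η) :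
    ∃ S : Finset M, z ∈ S ∧ ∀ S', S ⊆ S' → ∀ᶠ j in (U : Filter ℕ),
      ∀ φ, Kf z 1 φ → (∀ x, x ∉ badSet ε S S' → φ x = 0) → pr (ν j) φ ≤ η := by
  by_contra hcon
  push Not at hcon
  choose! g hg1 hg2 using hcon
  have hm : ∀ j, ∑ x ∈ (ν j).support, |ν j x| ≤ 2 * C / θ := fun j =>
    mass_bound hθ hd (hνz j) (hC j)
  obtain ⟨T, hT⟩ := exists_nat_gt ((2 * C + 1) / η)
  rw [div_lt_iff₀ hη] at hT
  let D : Finset M → ℝ := fun X => (1 + ε) / ε * Metric.diam (X : Set M)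
  have hD : ∀ X, 0 ≤ D X := fun X => by
    have : 0 ≤ Metric.diam (X : Set M) := Metric.diam_nonneg
    positivity
  have hdD : ∀ X : Finset M, Metric.diam (X : Set M) ≤ D X := fun X => by
    have : 0 ≤ Metric.diam (X : Set M) := Metric.diam_nonneg
    refine le_mul_of_one_le_left this ?_
    rw [le_div_iff₀ hε]; linarith
  have hDmono : ∀ X X' : Finset M, X ⊆ X' → D X ≤ D X' := fun X X' h =>
    mul_le_mul_of_nonneg_left (Metric.diam_mono (by exact_mod_cast h) X'.finite_toSet.isBounded)
      (by positivity)
  let τ : Finset M → ℝ := fun X => 1 / ((T + 1) * (2 * T + 4) * (D X + 1))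
  have hτ : ∀ X, 0 < τ X := fun X => by
    have := hD X
    positivity
  have hA := fun (X : Finset M) (hX : z ∈ X) => lemA hθ hd U ν hm hε (hD X) (hτ X) X hX
  choose! A hA1 hA2 using hA
  let X : ℕ → Finset M := fun n => (fun Y => g (A Y))^[n] {z}
  have hXs : ∀ n, X (n+1) = g (A (X n)) := fun n => Function.iterate_succ_apply' (fun Y => g (A Y)) n {z}
  have hXz : ∀ n, z ∈ X n := by
    intro n
    induction n with
    | zero => exact Finset.mem_singleton_self z
    | succ n ih => rw [hXs]; exact hg1 _ (hA1 _ ih ih) (hA1 _ ih ih)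
  let S : ℕ → Finset M := fun n => A (X n)
  have hXS : ∀ n, X n ⊆ S n := fun n => hA1 _ (hXz n)
  have hSX : ∀ n, S n ⊆ X (n+1) := fun n => by
    rw [hXs]; exact hg1 _ (hXS n (hXz n))
  have hXmono : Monotone X := monotone_nat_of_le_succ fun n => (hXS n).trans (hSX n)
  have hSmono : Monotone S := monotone_nat_of_le_succ fun n => (hSX n).trans (hXS (n+1))
  let B : ℕ → Set M := fun n => badSet ε (S n) (X (n+1))
  have hev : ∀ᶠ j in (U : Filter ℕ), ∀ i ∈ Finset.range T,
      (∑ x ∈ (ν j).support with (Metric.infDist x (S i : Set M) ≤ D (X i) ∧ x ∈ B i), |ν j x| ≤ τ (X i)) ∧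
      ∃ φ, Kf z 1 φ ∧ (∀ x, x ∉ B i → φ x = 0) ∧ η < pr (ν j) φ := by
    rw [Filter.eventually_all_finset]
    intro i _
    refine Filter.Eventually.and (hA2 (X i) (hXz i) _ (hSX i)) ?_
    have := hg2 (S i) (hXS i (hXz i))
    rw [← hXs] at this
    exact this
  obtain ⟨j, hj⟩ := hev.exists
  have hj1 := fun i hi => (hj i hi).1
  have hj2 := fun i hi => (hj i hi).2
  choose! φ hφK hφB hφη using hj2
  have hBz : ∀ i x, x ∈ B i → Metric.infDist x (S i : Set M) ≤ D (X (i+1)) := by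
    intro i x hx
    have hx' : (1 + ε) * Metric.infDist x (X (i+1) : Set M) < Metric.infDist x (S i : Set M) := hx
    obtain ⟨s, hs, hs'⟩ := exists_nearest (X (i+1)) (hXz (i+1)) x
    have h1 : Metric.infDist x (S i : Set M) ≤ dist x z :=
      Metric.infDist_le_dist_of_mem (hXS i (hXz i))
    have h2 : dist x z ≤ dist x s + dist s z := dist_triangle _ _ _
    have h3 : dist s z ≤ Metric.diam (X (i+1) : Set M) :=
      Metric.dist_le_diam_of_mem (X (i+1)).finite_toSet.isBounded hs (hXz (i+1))
    show _ ≤ (1 + ε) / ε * _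
    rw [div_mul_eq_mul_div, le_div_iff₀ hε]
    nlinarith
  let O : ℕ → Set M := fun k => {x | x ∈ B k ∧ ∃ i < k, x ∈ B i}
  have hOd : ∀ k x, x ∈ O k → Metric.infDist x (S k : Set M) ≤ D (X k) ∧ dist x z ≤ 2 * D (X k) := by
    rintro k x ⟨_, i, hik, hi⟩
    have h1 := hBz i x hi
    have h2 : D (X (i+1)) ≤ D (X k) := hDmono _ _ (hXmono hik)
    have h3 : Metric.infDist x (S k : Set M) ≤ Metric.infDist x (S i : Set M) :=
      Metric.infDist_le_infDist_of_subset (by exact_mod_cast hSmono hik.le) ⟨z, hXS i (hXz i)⟩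
    refine ⟨by linarith, ?_⟩
    obtain ⟨s, hs, hs'⟩ := exists_nearest (S i) (hXS i (hXz i)) x
    have h4 : dist x z ≤ dist x s + dist s z := dist_triangle _ _ _
    have h5 : dist s z ≤ Metric.diam (X k : Set M) :=
      Metric.dist_le_diam_of_mem (X k).finite_toSet.isBounded (hXmono hik (hSX i hs)) (hXz k)
    linarith [hdD (X k)]
  let Y : Set M := {x | ∀ k ∈ Finset.range T, x ∉ O k}
  let F : M → ℝ := fun x => ∑ k ∈ Finset.range T, φ k x
  have hzB : ∀ i, z ∉ B i := by
    intro i hi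
    have hx' : (1 + ε) * Metric.infDist z (X (i+1) : Set M) < Metric.infDist z (S i : Set M) := hi
    rw [Metric.infDist_zero_of_mem (s := (S i : Set M)) (hXS i (hXz i))] at hx'
    have : 0 ≤ Metric.infDist z (X (i+1) : Set M) := Metric.infDist_nonneg
    nlinarith
  have hzY : z ∈ Y := fun k _ h => hzB k h.1
  have hcard : ∀ x ∈ Y, ((Finset.range T).filter (fun k => x ∈ B k)).card ≤ 1 := by
    intro x hx
    rw [Finset.card_le_one]
    intro a ha b hb
    rw [Finset.mem_filter] at ha hb
    by_contra hab
    rcases lt_or_gt_of_ne hab with h | h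
    · exact hx b hb.1 ⟨hb.2, a, h, ha.2⟩
    · exact hx a ha.1 ⟨ha.2, b, h, hb.2⟩
  have hF : ∀ x ∈ Y, ∀ y ∈ Y, |F x - F y| ≤ 2 * dist x y := by
    intro x hx y hy
    have h1 : F x - F y = ∑ k ∈ (Finset.range T).filter (fun k => x ∈ B k) ∪ (Finset.range T).filter (fun k => y ∈ B k), (φ k x - φ k y) := by
      rw [← Finset.sum_sub_distrib]
      symm
      apply Finset.sum_subset
      · exact Finset.union_subset (Finset.filter_subset _ _) (Finset.filter_subset _ _)
      · intro k hk hk'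
        simp only [Finset.mem_union, Finset.mem_filter, not_or, not_and] at hk'
        rw [hφB k hk x (hk'.1 hk), hφB k hk y (hk'.2 hk), sub_zero]
    rw [h1]
    refine (Finset.abs_sum_le_sum_abs _ _).trans ?_
    refine (Finset.sum_le_card_nsmul _ _ (dist x y) ?_).trans ?_
    · intro k hk
      have hk' : k ∈ Finset.range T := by
        simp only [Finset.mem_union, Finset.mem_filter] at hk
        rcases hk with h | h <;> exact h.1
      simpa using (hφK k hk').2 x y
    · rw [nsmul_eq_mul]
      refine mul_le_mul_of_nonneg_right ?_ dist_nonneg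
      have h2 := (Finset.card_union_le ((Finset.range T).filter (fun k => x ∈ B k)) ((Finset.range T).filter (fun k => y ∈ B k))).trans (add_le_add (hcard x hx) (hcard y hy))
      exact_mod_cast h2
  obtain ⟨f, hf1, hf2, -⟩ := extLem Y ⟨z, hzY⟩ F (fun _ => 2) 2 (fun _ _ => by norm_num) hF
  have hFz : F z = 0 := Finset.sum_eq_zero fun k hk => (hφK k hk).1
  have hfK : Kf z 2 f := ⟨by rw [hf2 z hzY, hFz], hf1⟩
  have hfC := pr_le_of_Kf (hC j) two_pos hfK
  have hprF : pr (ν j) F = ∑ k ∈ Finset.range T, pr (ν j) (φ k) := by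
    unfold pr
    rw [Finset.sum_comm]
    exact Finset.sum_congr rfl fun x _ => by rw [Finset.mul_sum]
  have hlow : T * η ≤ pr (ν j) F := by
    rw [hprF]
    have := Finset.card_nsmul_le_sum (Finset.range T) (fun k => pr (ν j) (φ k)) η (fun k hk => (hφη k hk).le)
    simpa using this
  have hpt : ∀ x, |F x - f x| ≤ ∑ k ∈ Finset.range T, if x ∈ O k then (2 * T + 4) * D (X k) else 0 := by
    intro x
    have hnn : ∀ k ∈ Finset.range T, 0 ≤ (if x ∈ O k then (2 * T + 4) * D (X k) else 0) := by
      intro k _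
      split_ifs
      · exact mul_nonneg (by positivity) (hD _)
      · exact le_rfl
    by_cases hx : x ∈ Y
    · rw [hf2 x hx, sub_self, abs_zero]
      exact Finset.sum_nonneg hnn
    · have hx' : ∃ k ∈ Finset.range T, x ∈ O k := by
        by_contra h; push Not at h; exact hx h
      obtain ⟨k, hk, hxk⟩ := hx'
      refine le_trans ?_ (Finset.single_le_sum hnn hk)
      rw [if_pos hxk]
      have h1 := (hOd k x hxk).2
      have h2 : |f x| ≤ 2 * dist x z := by simpa [hfK.1] using hf1 x z
      have h3 : |F x| ≤ T * dist x z := by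
        refine (Finset.abs_sum_le_sum_abs _ _).trans ?_
        have := Finset.sum_le_card_nsmul (Finset.range T) (fun k => |φ k x|) (dist x z) (fun k hk => by
          simpa [(hφK k hk).1] using (hφK k hk).2 x z)
        simpa using this
      have h4 := abs_sub (F x) (f x)
      have h5 : (0:ℝ) ≤ T := by positivity
      nlinarith
  have herr : pr (ν j) F - pr (ν j) f ≤ 1 := by
    have h1 : pr (ν j) F - pr (ν j) f ≤ ∑ x ∈ (ν j).support, |ν j x| * ∑ k ∈ Finset.range T, (if x ∈ O k then (2 * T + 4) * D (X k) else 0) := by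
      unfold pr
      rw [← Finset.sum_sub_distrib]
      refine Finset.sum_le_sum fun x _ => ?_
      rw [← mul_sub]
      refine (le_abs_self _).trans ?_
      rw [abs_mul]
      exact mul_le_mul_of_nonneg_left (hpt x) (abs_nonneg _)
    refine h1.trans ?_
    simp_rw [Finset.mul_sum]
    rw [Finset.sum_comm]
    have h2 : ∀ k ∈ Finset.range T, ∑ x ∈ (ν j).support, |ν j x| * (if x ∈ O k then (2 * T + 4) * D (X k) else 0) ≤ 1 / (T + 1) := by
      intro k hk
      have hDk := hD (X k)
      have h3 : ∑ x ∈ (ν j).support, |ν j x| * (if x ∈ O k then (2 * T + 4) * D (X k) else 0)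
          ≤ (∑ x ∈ (ν j).support with (Metric.infDist x (S k : Set M) ≤ D (X k) ∧ x ∈ B k), |ν j x|) * ((2 * T + 4) * D (X k)) := by
        rw [Finset.sum_filter, Finset.sum_mul]
        refine Finset.sum_le_sum fun x _ => ?_
        by_cases hx : x ∈ O k
        · rw [if_pos hx, if_pos ⟨(hOd k x hx).1, hx.1⟩]
        · rw [if_neg hx, mul_zero]
          split_ifs
          · positivity
          · simp
      refine h3.trans ((mul_le_mul_of_nonneg_right (hj1 k hk) (by positivity)).trans ?_)
      show 1 / ((T + 1) * (2 * T + 4) * (D (X k) + 1)) * ((2 * T + 4) * D (X k)) ≤ 1 / ((T:ℝ) + 1)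
      rw [div_mul_eq_mul_div, div_le_div_iff₀ (by positivity) (by positivity)]
      have : (0:ℝ) ≤ (T + 1) * (2 * T + 4) := by positivity
      nlinarith
    refine (Finset.sum_le_card_nsmul _ _ _ h2).trans ?_
    rw [Finset.card_range, nsmul_eq_mul, mul_one_div, div_le_one (by positivity)]
    linarith
  linarith

lemma pr_cont {M : Type*} (ν : M →₀ ℝ) : Continuous (fun f : M → ℝ => pr ν f) := by
  unfold pr; fun_prop

open Classical in
lemma core {M : Type*} [MetricSpace M] {z : M} {θ : ℝ} (hθ : 0 < θ)
    (hd : ∀ x y : M, x ≠ y → θ ≤ dist x y) (ν : ℕ → M →₀ ℝ)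
    (hνz : ∀ j, ν j z = 0) {C : ℝ}
    (hC : ∀ j f, Kf z 1 f → pr (ν j) f ≤ C) (f : ℕ → M → ℝ) (hf : ∀ j, Kf z 1 (f j))
    {c δ : ℝ} (hc : ∀ j, c < pr (ν j) (f j))
    (hδ : ∀ f, Kf z 1 f → ∃ n, ∀ j ≥ n, pr (ν j) f ≤ δ) (h3 : 3 * δ < c) : False := by
  have hδ0 : 0 ≤ δ := by
    obtain ⟨n, hn⟩ := hδ (fun _ => 0) ⟨rfl, fun x y => by simp⟩
    simpa [pr] using hn n le_rfl
  obtain ⟨gap, hgap⟩ : ∃ gap, gap = c - 3 * δ := ⟨_, rfl⟩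
  have hgap0 : 0 < gap := by linarith
  obtain ⟨C1, hC1⟩ : ∃ C1, C1 = 2 * C / θ := ⟨_, rfl⟩
  have hm : ∀ j, ∑ x ∈ (ν j).support, |ν j x| ≤ C1 := fun j =>
    hC1 ▸ mass_bound hθ hd (hνz j) (hC j)
  have hC10 : 0 ≤ C1 := (Finset.sum_nonneg fun x _ => abs_nonneg _).trans (hm 0)
  obtain ⟨ε, hε, hε1, hε2⟩ : ∃ ε : ℝ, 0 < ε ∧ ε ≤ 1 ∧ ε * (28 * (δ + 1)) ≤ gap := by
    refine ⟨min 1 (gap / (28 * (δ + 1))), by positivity, min_le_left _ _, ?_⟩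
    rw [← le_div_iff₀ (by positivity)]; exact min_le_right _ _
  obtain ⟨σ, hσ, hσ1, hσ2⟩ : ∃ σ : ℝ, 0 < σ ∧ σ ≤ ε * θ ∧ σ * (4 * (C1 + 1)) ≤ gap := by
    refine ⟨min (ε * θ) (gap / (4 * (C1 + 1))), by positivity, min_le_left _ _, ?_⟩
    rw [← le_div_iff₀ (by positivity)]; exact min_le_right _ _
  obtain ⟨L, hL⟩ : ∃ L, L = (1 + ε) * (3 + 2 * ε) := ⟨_, rfl⟩
  have hL3 : 3 ≤ L := by nlinarith
  have hL1ε : 1 + ε ≤ L := by nlinarith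
  have hL7 : L ≤ 3 + 7 * ε := by nlinarith
  let U : Ultrafilter ℕ := Filter.hyperfilter ℕ
  have hUtop : (U : Filter ℕ) ≤ Filter.atTop := Nat.hyperfilter_le_atTop
  have hfb : ∀ j x, |f j x| ≤ dist x z := fun j x => by
    simpa [(hf j).1] using (hf j).2 x z
  have hex : ∀ x, ∃ a, Filter.Tendsto (fun j => f j x) (U : Filter ℕ) (nhds a) := by
    intro x
    have hc := isCompact_Icc (a := -dist x z) (b := dist x z)
    obtain ⟨a, _, ha⟩ := hc.ultrafilter_le_nhds (U.map (fun j => f j x)) (by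
      rw [Filter.le_principal_iff]
      exact Filter.mem_map.2 (Filter.Eventually.of_forall (fun j => abs_le.1 (hfb j x))))
    exact ⟨a, ha⟩
  choose h hh using hex
  have hhz : h z = 0 := by
    refine tendsto_nhds_unique (hh z) ?_
    simp only [(hf _).1]
    exact tendsto_const_nhds
  have hhL : ∀ x y, |h x - h y| ≤ dist x y := fun x y =>
    le_of_tendsto ((hh x).sub (hh y)).abs
      (Filter.Eventually.of_forall fun j => by simpa using (hf j).2 x y)
  obtain ⟨S1, hzS1, hS1⟩ := lemB hθ hd U ν hνz hC hε (η := gap / 48) (by positivity)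
  let K : Set (M → ℝ) := {u | (∀ x y, |u x - u y| ≤ L * dist x y) ∧
    ∀ s ∈ S1, ∀ x, |u x - h s| ≤ (1 + ε) * dist x s}
  have hKcl : IsClosed K := by
    refine IsClosed.and ?_ ?_
    · simp only [Set.ofPred_forall]
      exact isClosed_iInter fun x => isClosed_iInter fun y => isClosed_le (by fun_prop) (by fun_prop)
    · simp only [Set.ofPred_forall]
      exact isClosed_iInter fun s => isClosed_iInter fun _ => isClosed_iInter fun x =>
        isClosed_le (by fun_prop) (by fun_prop)
  have hKco : IsCompact K := by
    refine (isCompact_univ_pi (fun x : M => isCompact_Icc (a := -((1 + ε) * dist x z))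
      (b := (1 + ε) * dist x z))).of_isClosed_subset hKcl ?_
    intro u hu x _
    have := hu.2 z hzS1 x
    rw [hhz, sub_zero] at this
    exact abs_le.1 this
  have hhK : h ∈ K := by
    refine ⟨fun x y => (hhL x y).trans ?_, fun s _ x => (hhL x s).trans ?_⟩
    · exact le_mul_of_one_le_left dist_nonneg (by linarith)
    · exact le_mul_of_one_le_left dist_nonneg (by linarith)
  have : CompactSpace K := isCompact_iff_compactSpace.1 hKco
  have : Nonempty K := ⟨⟨h, hhK⟩⟩
  let A : ℕ → Set K := fun n => {u | ∀ j ≥ n, pr (ν j) u.1 ≤ L * δ}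
  have hAcl : ∀ n, IsClosed (A n) := by
    intro n
    simp only [A, Set.ofPred_forall]
    exact isClosed_iInter fun j => isClosed_iInter fun _ =>
      isClosed_le ((pr_cont (ν j)).comp continuous_subtype_val) continuous_const
  have hAU : ⋃ n, A n = Set.univ := by
    rw [Set.eq_univ_iff_forall]
    intro u
    have hLp : 0 < L := by linarith
    have hu0 : u.1 z = 0 := by
      have := u.2.2 z hzS1 z
      simpa [hhz] using this
    have huK : Kf z L u.1 := ⟨hu0, u.2.1⟩
    have hs := huK.smul L⁻¹
    rw [abs_of_pos (inv_pos.2 hLp), inv_mul_cancel₀ hLp.ne'] at hs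
    obtain ⟨n, hn⟩ := hδ _ hs
    refine Set.mem_iUnion.2 ⟨n, fun j hj => ?_⟩
    have := hn j hj
    rwa [pr_smul, inv_mul_le_iff₀ hLp] at this
  obtain ⟨n, f0, hf0⟩ := nonempty_interior_of_iUnion_of_closed hAcl hAU
  obtain ⟨t, htA, hto, hft⟩ := mem_interior.1 hf0
  obtain ⟨V, hV, rfl⟩ := isOpen_induced_iff.1 hto
  obtain ⟨I, u, hu1, hu2⟩ := isOpen_pi_iff.1 hV f0.1 hft
  obtain ⟨f0, hf0K⟩ := f0
  simp only at hu1 hft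
  let S := S1 ∪ I
  have hS1S : S1 ⊆ S := Finset.subset_union_left
  have hfin : ∀ w ∈ K, (∀ x ∈ S, w x = f0 x) → ∀ j ≥ n, pr (ν j) w ≤ L * δ := by
    intro w hw hwS
    refine htA (a := ⟨w, hw⟩) (hu2 fun i hi => ?_)
    show w i ∈ u i
    rw [hwS i (Finset.mem_union_right _ hi)]
    exact (hu1 i hi).2
  have hev1 : ∀ᶠ j in (U : Filter ℕ), ∀ s ∈ S1, |f j s - h s| ≤ σ := by
    rw [Filter.eventually_all_finset]
    intro s _
    have := (hh s).eventually (Metric.closedBall_mem_nhds (h s) hσ)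
    simpa [Real.dist_eq] using this
  have hev0 : ∀ᶠ j in (U : Filter ℕ), n ≤ j := hUtop (Filter.eventually_ge_atTop n)
  obtain ⟨j, ⟨hjn, hjσ⟩, hjB⟩ :=
    ((hev0.and hev1).and (hS1 S hS1S)).exists
  have hfj : ∀ x y, |f j x - f j y| ≤ dist x y := fun x y => by simpa using (hf j).2 x y
  let g : M → ℝ := fun x => if x ∈ S then f0 x else f j x
  let κ : M → ℝ := fun x => if x ∈ S1 then 1 + ε else L
  let Y : Set M := {x | x ∈ S ∨ x ∉ badSet ε S1 S}
  have hσd : ∀ x y : M, x ≠ y → σ ≤ ε * dist x y := fun x y hxy =>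
    hσ1.trans (mul_le_mul_of_nonneg_left (hd x y hxy) hε.le)
  have hfh : ∀ s ∈ S1, ∀ y, y ≠ s → |f j y - h s| ≤ (1 + ε) * dist y s := by
    intro s hs y hys
    have h1 := hfj y s
    have h2 := hjσ s hs
    have h4 := hσd y s hys
    have h5 := abs_sub_le (f j y) (f j s) (h s)
    linarith
  have c1 : ∀ s ∈ S1, ∀ y, |g y - h s| ≤ (1 + ε) * dist y s := by
    intro s hs y
    by_cases hy : y ∈ S
    · simp only [g, if_pos hy]
      exact hf0K.2 s hs y
    · simp only [g, if_neg hy]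
      exact hfh s hs y (fun e => hy (e ▸ hS1S hs))
  have hgS1 : ∀ s ∈ S1, g s = h s := by
    intro s hs
    have := c1 s hs s
    rw [dist_self, mul_zero] at this
    exact sub_eq_zero.1 (abs_nonpos_iff.1 this)
  have c2 : ∀ y ∈ S, ∀ x, x ∉ S → x ∉ badSet ε S1 S → |f j x - f0 y| ≤ L * dist x y := by
    intro y hy x hx hxB
    have hxB' : Metric.infDist x (S1 : Set M) ≤ (1 + ε) * Metric.infDist x (S : Set M) :=
      not_lt.1 hxB
    obtain ⟨s, hs, hs'⟩ := exists_nearest S1 hzS1 x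
    have h1 : Metric.infDist x (S : Set M) ≤ dist x y := Metric.infDist_le_dist_of_mem hy
    have h2 : dist x s ≤ (1 + ε) * dist x y := by
      rw [← hs']; exact hxB'.trans (mul_le_mul_of_nonneg_left h1 (by linarith))
    have h4 := hfh s hs x (fun e => hx (e ▸ hS1S hs))
    have h5 := hf0K.2 s hs y
    have h6 := abs_sub_le (f j x) (h s) (f0 y)
    rw [abs_sub_comm (h s)] at h6
    have h7 : dist y s ≤ dist x y + dist x s := dist_triangle_left _ _ _
    have h8 : |f j x - f0 y| ≤ (1 + ε) * (dist x y + 2 * dist x s) := by nlinarith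
    refine h8.trans ?_
    rw [hL, mul_assoc]
    refine mul_le_mul_of_nonneg_left ?_ (by linarith)
    linarith
  have hg : ∀ y ∈ Y, ∀ y' ∈ Y, |g y - g y'| ≤ κ y * dist y y' := by
    intro y hy y' hy'
    by_cases h1 : y ∈ S1
    · simp only [κ, if_pos h1]
      rw [hgS1 y h1, abs_sub_comm, dist_comm]
      exact c1 y h1 y'
    · simp only [κ, if_neg h1]
      by_cases h2 : y ∈ S <;> by_cases h4 : y' ∈ S
      · simp only [g, if_pos h2, if_pos h4]; exact hf0K.1 y y'
      · simp only [g, if_pos h2, if_neg h4]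
        rw [abs_sub_comm, dist_comm]
        exact c2 y h2 y' h4 (hy'.resolve_left h4)
      · simp only [g, if_neg h2, if_pos h4]
        exact c2 y' h4 y h2 (hy.resolve_left h2)
      · simp only [g, if_neg h2, if_neg h4]
        exact (hfj y y').trans (le_mul_of_one_le_left dist_nonneg (by linarith))
  have hSY : ∀ x ∈ S, x ∈ Y := fun x hx => Or.inl hx
  obtain ⟨w, hw1, hw2, hw3⟩ := extLem Y ⟨z, hSY z (hS1S hzS1)⟩ g κ L (by
    intro y _
    simp only [κ]
    split_ifs
    · exact ⟨by linarith, hL1ε⟩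
    · exact ⟨by linarith, le_rfl⟩) hg
  have hw4 : ∀ s ∈ S1, ∀ x, |w x - h s| ≤ (1 + ε) * dist x s := by
    intro s hs x
    have := hw3 s (hSY s (hS1S hs)) x
    rw [hgS1 s hs] at this
    simpa only [κ, if_pos hs] using this
  have hwK : w ∈ K := ⟨hw1, hw4⟩
  have hup := hfin w hwK (fun x hx => by rw [hw2 x (hSY x hx)]; simp only [g, if_pos hx]) j hjn
  let φ : M → ℝ := fun x => if x ∈ S1 then 0 else w x - f j x
  have hmix : ∀ s ∈ S1, ∀ x, x ∉ S1 → |w x - f j x| ≤ (L + 2) * dist x s := by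
    intro s hs x hx
    have hne : x ≠ s := fun e => hx (e ▸ hs)
    have h1 := hw4 s hs x
    have h2 := hfh s hs x hne
    have h4 := abs_sub_le (w x) (h s) (f j x)
    rw [abs_sub_comm (h s)] at h4
    have h5 : 0 ≤ dist x s := dist_nonneg
    nlinarith
  have hφL : Kf z (L + 2) φ := by
    refine ⟨by simp only [φ, if_pos hzS1], fun x y => ?_⟩
    by_cases h1 : x ∈ S1 <;> by_cases h2 : y ∈ S1
    · simp only [φ, if_pos h1, if_pos h2, sub_zero, abs_zero]
      have : 0 ≤ dist x y := dist_nonneg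
      positivity
    · simp only [φ, if_pos h1, if_neg h2]
      rw [zero_sub, abs_neg, dist_comm]
      exact hmix x h1 y h2
    · simp only [φ, if_neg h1, if_pos h2]
      rw [sub_zero]
      exact hmix y h2 x h1
    · simp only [φ, if_neg h1, if_neg h2]
      have h4 := hw1 x y
      have h5 := hfj x y
      have h6 := abs_sub (w x - w y) (f j x - f j y)
      have h7 : w x - f j x - (w y - f j y) = w x - w y - (f j x - f j y) := by ring
      rw [h7]
      have h5 : 0 ≤ dist x y := dist_nonneg
      nlinarith
  have hφB : ∀ x, x ∉ badSet ε S1 S → φ x = 0 := by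
    intro x hx
    by_cases h1 : x ∈ S1
    · simp only [φ, if_pos h1]
    · have h2 : x ∉ S := by
        intro hxS
        have hxB' : Metric.infDist x (S1 : Set M) ≤ (1 + ε) * Metric.infDist x (S : Set M) :=
          not_lt.1 hx
        rw [Metric.infDist_zero_of_mem (s := (S : Set M)) hxS, mul_zero] at hxB'
        obtain ⟨s, hs, hs'⟩ := exists_nearest S1 hzS1 x
        rw [hs'] at hxB'
        exact h1 (dist_le_zero.1 hxB' ▸ hs)
      simp only [φ, if_neg h1]
      rw [hw2 x (Or.inr hx)]
      simp only [g, if_neg h2, sub_self]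
  have hL2 : 0 < L + 2 := by linarith
  have hφ1 := hφL.smul (-(L + 2)⁻¹)
  rw [abs_neg, abs_of_pos (inv_pos.2 hL2), inv_mul_cancel₀ hL2.ne'] at hφ1
  have hφ2 := hjB _ hφ1 (fun x hx => by rw [hφB x hx, mul_zero])
  rw [pr_smul, neg_mul, neg_le, inv_mul_eq_div, le_div_iff₀ hL2] at hφ2
  have hlow : -(C1 * σ) ≤ pr (ν j) w - pr (ν j) (f j) - pr (ν j) φ := by
    have h1 : -∑ x ∈ (ν j).support, |ν j x| * σ ≤ pr (ν j) w - pr (ν j) (f j) - pr (ν j) φ := by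
      unfold pr
      rw [← Finset.sum_sub_distrib, ← Finset.sum_sub_distrib, ← Finset.sum_neg_distrib]
      refine Finset.sum_le_sum fun x _ => ?_
      rw [← mul_sub, ← mul_sub]
      have h2 : |w x - f j x - φ x| ≤ σ := by
        by_cases hx : x ∈ S1
        · simp only [φ, if_pos hx, sub_zero]
          have : w x = h x := by rw [hw2 x (hSY x (hS1S hx)), hgS1 x hx]
          rw [this, abs_sub_comm]; exact hjσ x hx
        · simp only [φ, if_neg hx, sub_self, abs_zero]; exact hσ.le
      have h4 := neg_abs_le (ν j x * (w x - f j x - φ x))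
      rw [abs_mul] at h4
      have := mul_le_mul_of_nonneg_left h2 (abs_nonneg (ν j x))
      linarith
    rw [← Finset.sum_mul] at h1
    have := mul_le_mul_of_nonneg_right (hm j) hσ.le
    linarith
  have hcj := hc j
  have e1 : L * δ ≤ 3 * δ + gap / 4 := by nlinarith
  have e2 : -(gap / 4) ≤ -(gap / 48) * (L + 2) := by nlinarith
  have e3 : C1 * σ ≤ gap / 4 := by nlinarith
  linarith

lemma pr_sub {M : Type*} (a b : M →₀ ℝ) (f : M → ℝ) : pr (a - b) f = pr a f - pr b f :=
  Finsupp.sum_sub_index (h := fun x r => r * f x) (fun x b₁ b₂ => by ring)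

lemma pr_erase {M : Type*} {z : M} (a : M →₀ ℝ) (f : M → ℝ) (hz : f z = 0) :
    pr (a.erase z) f = pr a f := by
  classical
  unfold pr
  rw [Finsupp.support_erase, ← Finset.sum_erase a.support (a := z) (by rw [hz, mul_zero])]
  refine Finset.sum_congr rfl fun x hx => ?_
  rw [Finsupp.erase_ne (Finset.ne_of_mem_erase hx)]

lemma freeNorm_bdd {M : Type*} [MetricSpace M] (z : M) (μ : M →₀ ℝ) :
    BddAbove {s | ∃ f : M → ℝ, f z = 0 ∧ LipschitzWith 1 f ∧ s = ∑ x ∈ μ.support, μ x * f x} := by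
  refine ⟨∑ x ∈ μ.support, |μ x| * dist x z, ?_⟩
  rintro s ⟨f, h0, hf, rfl⟩
  refine Finset.sum_le_sum fun x _ => ?_
  have h1 := (Kf.of_lip h0 hf).2 x z
  rw [h0, sub_zero, one_mul] at h1
  calc μ x * f x ≤ |μ x * f x| := le_abs_self _
    _ = |μ x| * |f x| := abs_mul _ _
    _ ≤ _ := mul_le_mul_of_nonneg_left h1 (abs_nonneg _)

lemma pr_le_freeNorm {M : Type*} [MetricSpace M] {z : M} (μ : M →₀ ℝ) {f : M → ℝ}
    (hf : Kf z 1 f) : pr μ f ≤ freeNorm z μ :=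
  le_csSup (freeNorm_bdd z μ) ⟨f, hf.1, hf.lip, rfl⟩

lemma Kf_zero {M : Type*} [MetricSpace M] (z : M) : Kf z 1 (fun _ => (0 : ℝ)) :=
  ⟨rfl, fun x y => by simp⟩

lemma freeNorm_nonneg {M : Type*} [MetricSpace M] (z : M) (μ : M →₀ ℝ) : 0 ≤ freeNorm z μ := by
  simpa [pr] using pr_le_freeNorm μ (Kf_zero z)

lemma pr_abs_le {M : Type*} [MetricSpace M] {z : M} (μ : M →₀ ℝ) {f : M → ℝ}
    (hf : Kf z 1 f) : |pr μ f| ≤ freeNorm z μ := by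
  refine abs_le.2 ⟨?_, pr_le_freeNorm μ hf⟩
  have h := hf.smul (-1)
  rw [abs_neg, abs_one, one_mul] at h
  have := pr_le_freeNorm μ h
  rw [pr_smul] at this
  linarith

/-- The Lipschitz-free space over a uniformly discrete metric space is `3`-Schur. -/
theorem freeSpace_three_schur_of_uniformlyDiscrete
    {M : Type*} [MetricSpace M] (z : M)
    (hud : ∃ θ : ℝ, 0 < θ ∧ ∀ x y : M, x ≠ y → θ ≤ dist x y)
    (μ : ℕ → M →₀ ℝ) (hbdd : ∃ C : ℝ, ∀ n, freeNorm z (μ n) ≤ C) :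
    seqCa z μ ≤ 3 * seqDe z μ := by
  obtain ⟨θ, hθ, hd⟩ := hud
  obtain ⟨C, hC⟩ := hbdd
  by_contra hcon
  rw [not_le] at hcon
  have hC0 : 0 ≤ C := (freeNorm_nonneg z _).trans (hC 0)
  have hb : ∀ k l f, Kf z 1 f → |pr (μ k - μ l) f| ≤ 2 * C := by
    intro k l f hf
    rw [pr_sub]
    have h1 := (pr_abs_le (μ k) hf).trans (hC k)
    have h2 := (pr_abs_le (μ l) hf).trans (hC l)
    exact (abs_sub _ _).trans (by linarith)
  obtain ⟨c, hc1, hc2⟩ := exists_between hcon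
  obtain ⟨δ, hδ1, hδ2⟩ : ∃ δ, seqDe z μ < δ ∧ δ < c / 3 := exists_between (by linarith)
  have hA : ∀ n : ℕ, ∃ k l f, n ≤ k ∧ n ≤ l ∧ Kf z 1 f ∧ c < pr (μ k - μ l) f := by
    intro n
    have h1 : c < sSup {s | ∃ k, n ≤ k ∧ ∃ l, n ≤ l ∧ s = freeNorm z (μ k - μ l)} := by
      refine hc2.trans_le (csInf_le ⟨0, ?_⟩ ⟨n, rfl⟩)
      rintro t ⟨m, rfl⟩
      refine Real.sSup_nonneg ?_
      rintro s ⟨k, _, l, _, rfl⟩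
      exact freeNorm_nonneg z _
    obtain ⟨_, ⟨k, hk, l, hl, rfl⟩, h2⟩ := exists_lt_of_lt_csSup
      (by exact ⟨_, n, le_rfl, n, le_rfl, rfl⟩) h1
    obtain ⟨_, ⟨f, hf0, hf, rfl⟩, h3⟩ := exists_lt_of_lt_csSup
      (by exact ⟨_, fun _ => 0, rfl, (Kf_zero z).lip, rfl⟩) h2
    exact ⟨k, l, f, hk, hl, Kf.of_lip hf0 hf, h3⟩
  choose k l f hk hl hf hcf using hA
  have hbd : ∀ f, Kf z 1 f → ∀ n : ℕ, BddAbove {s | ∃ k, n ≤ k ∧ ∃ l, n ≤ l ∧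
      s = |∑ x ∈ (μ k - μ l).support, (μ k - μ l) x * f x|} := by
    intro f hf n
    refine ⟨2 * C, ?_⟩
    rintro s ⟨k, _, l, _, rfl⟩
    exact hb k l f hf
  have hbelow : ∀ f : M → ℝ, BddBelow {u | ∃ n : ℕ, u = sSup {s | ∃ k, n ≤ k ∧ ∃ l, n ≤ l ∧
      s = |∑ x ∈ (μ k - μ l).support, (μ k - μ l) x * f x|}} := by
    intro f
    refine ⟨0, ?_⟩
    rintro t ⟨m, rfl⟩
    refine Real.sSup_nonneg ?_
    rintro s ⟨k, _, l, _, rfl⟩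
    exact abs_nonneg _
  have hD : ∀ f, Kf z 1 f → ∃ n : ℕ, ∀ k ≥ n, ∀ l ≥ n, |pr (μ k - μ l) f| ≤ δ := by
    intro f hf
    have h1 : sInf {u | ∃ n : ℕ, u = sSup {s | ∃ k, n ≤ k ∧ ∃ l, n ≤ l ∧
      s = |∑ x ∈ (μ k - μ l).support, (μ k - μ l) x * f x|}} ≤ seqDe z μ := by
      refine le_csSup ⟨2 * C, ?_⟩ ⟨f, hf.1, hf.lip, rfl⟩
      rintro t ⟨g, hg0, hg, rfl⟩
      refine (csInf_le (hbelow g) ⟨0, rfl⟩).trans (Real.sSup_le ?_ (by linarith))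
      rintro s ⟨k, _, l, _, rfl⟩
      exact hb k l g (Kf.of_lip hg0 hg)
    obtain ⟨_, ⟨n, rfl⟩, h2⟩ := exists_lt_of_csInf_lt (by exact ⟨_, 0, rfl⟩) (h1.trans_lt hδ1)
    exact ⟨n, fun k hk l hl => (le_csSup (hbd f hf n) ⟨k, hk, l, hl, rfl⟩).trans h2.le⟩
  refine core hθ hd (fun j => (μ (k j) - μ (l j)).erase z) (fun j => Finsupp.erase_same)
    (C := 2 * C) ?_ f hf (c := c) (δ := δ) ?_ ?_ (by linarith)
  · intro j f hf
    rw [pr_erase _ _ hf.1]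
    exact (le_abs_self _).trans (hb _ _ f hf)
  · intro j
    rw [pr_erase _ _ (hf j).1]
    exact hcf j
  · intro f hf
    obtain ⟨n, hn⟩ := hD f hf
    refine ⟨n, fun j hj => ?_⟩
    rw [pr_erase _ _ hf.1]
    exact (le_abs_self _).trans (hn _ (hj.trans (hk j)) _ (hj.trans (hl j)))
end

section
/- For every c with 1 ≤ c < 3 there exist a uniformly discrete pointed metric space (M,d,0) and a sequence (μ_n) of finitely supported functions μ_n : M → ℝ with sup_n ‖μ_n‖ < ∞ (free norm) such that ca(μ_n) > c·de(μ_n). (That is, the constant 3 in the statement 'F(M) is 3-Schur for uniformly discrete M' is optimal.) -/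
open scoped BigOperators

namespace Schur3

open Filter Topology

inductive Pt (Q : ℕ) : Type
  | X (n : ℕ) (s : ℕ → Fin (Q + 1)) : Pt Q
  | Y (n : ℕ) (s : ℕ → Fin (Q + 1)) : Pt Q

variable {Q : ℕ}

def Adj (m : ℕ) (s : ℕ → Fin (Q + 1)) (n : ℕ) (s' : ℕ → Fin (Q + 1)) : Prop :=
  m < n ∧ (∀ i ≤ m, s i = s' i) ∧ s m = s' n

def Link (m : ℕ) (s : ℕ → Fin (Q + 1)) (n : ℕ) (s' : ℕ → Fin (Q + 1)) : Prop :=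
  ∃ k r, Adj m s k r ∧ Adj n s' k r

open Classical in
noncomputable def pdist : Pt Q → Pt Q → ℝ
  | .X m s, .X n s' => if m = n ∧ s = s' then 0 else if Link m s n s' then 2 else 4
  | .X m s, .Y n s' => if Adj m s n s' then 1 else 3
  | .Y n s', .X m s => if Adj m s n s' then 1 else 3
  | .Y m s, .Y n s' => if m = n ∧ s = s' then 0 else 2

theorem Link.symm {m n : ℕ} {s s' : ℕ → Fin (Q + 1)} (h : Link m s n s') : Link n s' m s := by
  obtain ⟨k, r, h1, h2⟩ := h
  exact ⟨k, r, h2, h1⟩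

theorem link_comm {m n : ℕ} {s s' : ℕ → Fin (Q + 1)} : Link m s n s' ↔ Link n s' m s :=
  ⟨Link.symm, Link.symm⟩

theorem pdist_comm (p r : Pt Q) : pdist p r = pdist r p := by
  rcases p with ⟨m, s⟩ | ⟨m, s⟩ <;> rcases r with ⟨n, s'⟩ | ⟨n, s'⟩ <;> simp only [pdist]
  · have e1 : (m = n ∧ s = s') ↔ (n = m ∧ s' = s) := by constructor <;> (rintro ⟨rfl, rfl⟩; simp)
    have e2 : Link m s n s' ↔ Link n s' m s := link_comm
    by_cases h : m = n ∧ s = s'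
    · rw [if_pos h, if_pos (e1.1 h)]
    · rw [if_neg h, if_neg (fun h' => h (e1.2 h'))]
      by_cases h2 : Link m s n s'
      · rw [if_pos h2, if_pos h2.symm]
      · rw [if_neg h2, if_neg (fun h' => h2 h'.symm)]
  · have e1 : (m = n ∧ s = s') ↔ (n = m ∧ s' = s) := by constructor <;> (rintro ⟨rfl, rfl⟩; simp)
    by_cases h : m = n ∧ s = s'
    · rw [if_pos h, if_pos (e1.1 h)]
    · rw [if_neg h, if_neg (fun h' => h (e1.2 h'))]

theorem pdist_self (p : Pt Q) : pdist p p = 0 := by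
  rcases p with ⟨m, s⟩ | ⟨m, s⟩ <;> simp [pdist]

theorem one_le_pdist {p r : Pt Q} (h : p ≠ r) : 1 ≤ pdist p r := by
  rcases p with ⟨m, s⟩ | ⟨m, s⟩ <;> rcases r with ⟨n, s'⟩ | ⟨n, s'⟩ <;> simp only [pdist]
  · rw [if_neg (by rintro ⟨rfl, rfl⟩; exact h rfl)]
    split_ifs <;> norm_num
  · split_ifs <;> norm_num
  · split_ifs <;> norm_num
  · rw [if_neg (by rintro ⟨rfl, rfl⟩; exact h rfl)]
    norm_num

theorem pdist_le (p r : Pt Q) : pdist p r ≤ 4 := by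
  rcases p with ⟨m, s⟩ | ⟨m, s⟩ <;> rcases r with ⟨n, s'⟩ | ⟨n, s'⟩ <;> simp only [pdist] <;>
  split_ifs <;> norm_num

theorem pdist_tri (p r v : Pt Q) : pdist p v ≤ pdist p r + pdist r v := by
  by_cases h1 : p = r
  · subst h1; rw [pdist_self]; simp
  by_cases h2 : r = v
  · subst h2; rw [pdist_self]; simp
  by_cases h3 : p = v
  · subst h3; rw [pdist_self]
    have := one_le_pdist h1
    have := one_le_pdist h2
    linarith
  rcases p with ⟨m, s⟩ | ⟨m, s⟩ <;> rcases r with ⟨n, s'⟩ | ⟨n, s'⟩ <;>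
    rcases v with ⟨l, u⟩ | ⟨l, u⟩ <;> simp only [pdist] <;>
    simp only [Pt.X.injEq, Pt.Y.injEq] at h1 h2 h3 <;>
    simp only [h1, h2, h3, if_false]
  case X.Y.X =>
    by_cases ha : Adj m s n s'
    · by_cases hb : Adj l u n s'
      · rw [if_pos (show Link m s l u from ⟨n, s', ha, hb⟩), if_pos ha, if_pos hb]; norm_num
      · rw [if_pos ha, if_neg hb]; split_ifs <;> norm_num
    · rw [if_neg ha]; split_ifs <;> norm_num
  all_goals first | norm_num; done | (split_ifs <;> norm_num)

noncomputable instance : MetricSpace (Pt Q) where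
  dist := pdist
  dist_self := pdist_self
  dist_comm := pdist_comm
  dist_triangle := pdist_tri
  eq_of_dist_eq_zero := by
    intro x y h
    by_contra hne
    have := one_le_pdist hne
    change pdist x y = 0 at h
    linarith

theorem dist_def (p r : Pt Q) : dist p r = pdist p r := rfl

/-- averaging over the first coordinates -/
noncomputable def Av {V : Type} [AddCommGroup V] [Module ℝ V] :
    ℕ → ((ℕ → Fin (Q + 1)) → V) → V
  | 0, g => g 0
  | K + 1, g => ((Q : ℝ) + 1)⁻¹ • ∑ c : Fin (Q + 1), Av K (fun t => g (Function.update t K c))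

section
variable {V W : Type} [AddCommGroup V] [Module ℝ V] [AddCommGroup W] [Module ℝ W]

theorem Av_map (L : V →ₗ[ℝ] W) (K : ℕ) (g : (ℕ → Fin (Q + 1)) → V) :
    L (Av K g) = Av K (fun t => L (g t)) := by
  induction K generalizing g with
  | zero => rfl
  | succ K ih => simp [Av, ih]

theorem Av_add (K : ℕ) (g h : (ℕ → Fin (Q + 1)) → V) :
    Av K (fun t => g t + h t) = Av K g + Av K h := by
  induction K generalizing g h with
  | zero => rfl
  | succ K ih => simp [Av, ih, Finset.sum_add_distrib]

theorem Av_smul (K : ℕ) (a : ℝ) (g : (ℕ → Fin (Q + 1)) → V) :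
    Av K (fun t => a • g t) = a • Av K g := by
  induction K generalizing g with
  | zero => rfl
  | succ K ih => simp only [Av, ih]; rw [← Finset.smul_sum, smul_comm]

theorem Av_const (K : ℕ) (a : V) : Av K (fun _ : ℕ → Fin (Q + 1) => a) = a := by
  induction K with
  | zero => rfl
  | succ K ih =>
    simp only [Av, ih]
    rw [Finset.sum_const, Finset.card_univ, Fintype.card_fin, ← Nat.cast_smul_eq_nsmul ℝ, smul_smul]
    push_cast
    rw [inv_mul_cancel₀ (by positivity), one_smul]

theorem Av_sum {ι : Type} (S : Finset ι) (K : ℕ) (g : ι → (ℕ → Fin (Q + 1)) → V) :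
    Av K (fun t => ∑ i ∈ S, g i t) = ∑ i ∈ S, Av K (g i) := by
  classical
  induction S using Finset.induction_on with
  | empty => simp [Av_const]
  | insert a S ha ih => simp only [Finset.sum_insert ha]; rw [Av_add, ih]

theorem Av_stab (n K : ℕ) (h : n ≤ K) (g : (ℕ → Fin (Q + 1)) → V)
    (hg : ∀ t k c, n ≤ k → g (Function.update t k c) = g t) : Av K g = Av n g := by
  induction K, h using Nat.le_induction with
  | base => rfl
  | succ K hK ih =>
    rw [← ih]
    simp only [Av]
    simp only [hg _ _ _ hK]
    rw [Finset.sum_const, Finset.card_univ, Fintype.card_fin, ← Nat.cast_smul_eq_nsmul ℝ, smul_smul]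
    push_cast
    rw [inv_mul_cancel₀ (by positivity), one_smul]
end

theorem Av_mono (K : ℕ) (g h : (ℕ → Fin (Q + 1)) → ℝ) (hgh : ∀ t, g t ≤ h t) :
    Av K g ≤ Av K h := by
  induction K generalizing g h with
  | zero => exact hgh _
  | succ K ih =>
    simp only [Av, smul_eq_mul]
    apply mul_le_mul_of_nonneg_left _ (by positivity)
    exact Finset.sum_le_sum fun c _ => ih _ _ fun t => hgh _

theorem Av_sq (w : ℕ → ℝ) (u : Fin (Q + 1) → ℝ) (hu : ∑ c, u c = 0) (hu1 : ∀ c, |u c| ≤ 1)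
    (K : ℕ) :
    Av K (fun t : ℕ → Fin (Q + 1) => (∑ i ∈ Finset.range K, w i * u (t i)) ^ 2)
      ≤ ∑ i ∈ Finset.range K, (w i) ^ 2 := by
  induction K with
  | zero => simp [Av]
  | succ K ih =>
    set P : (ℕ → Fin (Q + 1)) → ℝ := fun t => ∑ i ∈ Finset.range K, w i * u (t i) with hP
    have key : ∀ c, Av K (fun t : ℕ → Fin (Q + 1) => (∑ i ∈ Finset.range (K + 1),
        w i * u (Function.update t K c i)) ^ 2) =
        Av K (fun t => P t ^ 2) + (2 * w K * Av K P) * u c + (w K * u c) ^ 2 := by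
      intro c
      have h1 : ∀ t : ℕ → Fin (Q + 1), (∑ i ∈ Finset.range (K + 1),
          w i * u (Function.update t K c i)) ^ 2
          = P t ^ 2 + ((2 * w K * u c) • P t + (w K * u c) ^ 2) := by
        intro t
        rw [Finset.sum_range_succ, Function.update_self]
        have : ∑ i ∈ Finset.range K, w i * u (Function.update t K c i) = P t := by
          apply Finset.sum_congr rfl
          intro i hi
          rw [Function.update_of_ne (Finset.mem_range.1 hi).ne]
        rw [this, smul_eq_mul]; ring
      simp only [h1]
      rw [Av_add, Av_add, Av_smul, Av_const, smul_eq_mul]; ring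
    simp only [Av, key]
    rw [Finset.sum_add_distrib, Finset.sum_add_distrib, ← Finset.mul_sum, hu, Finset.sum_range_succ,
      Finset.sum_const, Finset.card_univ, Fintype.card_fin, smul_eq_mul, nsmul_eq_mul]
    have h2 : ∑ c, (w K * u c) ^ 2 ≤ ((Q : ℝ) + 1) * w K ^ 2 := by
      calc ∑ c, (w K * u c) ^ 2 ≤ ∑ c : Fin (Q + 1), w K ^ 2 := by
            apply Finset.sum_le_sum
            intro c _
            rw [mul_pow]
            have : u c ^ 2 ≤ 1 := (sq_le_one_iff_abs_le_one _).2 (hu1 c)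
            nlinarith [sq_nonneg (w K)]
        _ = _ := by simp
    have hq : (0 : ℝ) < (Q : ℝ) + 1 := by positivity
    rw [inv_mul_le_iff₀ hq]
    push_cast
    nlinarith

noncomputable def tr (n : ℕ) (t : ℕ → Fin (Q + 1)) : ℕ → Fin (Q + 1) :=
  fun i => if i ≤ n then t i else 0

theorem tr_update (n : ℕ) (t : ℕ → Fin (Q + 1)) (k c) (h : n + 1 ≤ k) :
    tr n (Function.update t k c) = tr n t := by
  funext i
  unfold tr
  split_ifs with hi
  · rw [Function.update_of_ne (by omega)]
  · rfl

theorem adj_tr {m n : ℕ} (h : m < n) (t : ℕ → Fin (Q + 1)) (e : t m = t n) :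
    Adj m (tr m t) n (tr n t) := by
  refine ⟨h, fun i hi => ?_, ?_⟩
  · simp [tr, hi, hi.trans h.le]
  · simp [tr, e]

noncomputable def mu (n : ℕ) : Pt Q →₀ ℝ :=
  Av (n + 1) (fun t => Finsupp.single (Pt.X n (tr n t)) 1 - Finsupp.single (Pt.Y n (tr n t)) 1)

noncomputable def pr (f : Pt Q → ℝ) : (Pt Q →₀ ℝ) →ₗ[ℝ] ℝ := Finsupp.linearCombination ℝ f

theorem pr_eq (f : Pt Q → ℝ) (ν : Pt Q →₀ ℝ) : ∑ x ∈ ν.support, ν x * f x = pr f ν := by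
  simp [pr, Finsupp.linearCombination_apply, Finsupp.sum]

noncomputable def al (f : Pt Q → ℝ) (n : ℕ) : ℝ := Av (n + 1) (fun t => f (Pt.X n (tr n t)))
noncomputable def be (f : Pt Q → ℝ) (n : ℕ) : ℝ := Av (n + 1) (fun t => f (Pt.Y n (tr n t)))

theorem pr_mu (f : Pt Q → ℝ) (n : ℕ) : pr f (mu n) = al f n - be f n := by
  unfold mu al be
  rw [Av_map]
  have : ∀ t : ℕ → Fin (Q + 1), pr f (Finsupp.single (Pt.X n (tr n t)) 1 -
      Finsupp.single (Pt.Y n (tr n t)) 1) =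
      f (Pt.X n (tr n t)) + (-1 : ℝ) • f (Pt.Y n (tr n t)) := by
    intro t
    simp [pr]; ring
  simp only [this]
  rw [Av_add, Av_smul, smul_eq_mul]; ring

theorem lip_iff {f : Pt Q → ℝ} : LipschitzWith 1 f ↔ ∀ p r, f p - f r ≤ pdist p r := by
  rw [lipschitzWith_iff_dist_le_mul]
  constructor
  · intro h p r
    have := h p r
    rw [Real.dist_eq, dist_def] at this
    have h2 := le_abs_self (f p - f r)
    push_cast at this
    linarith
  · intro h p r
    rw [Real.dist_eq, dist_def, abs_le]
    have h1 := h p r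
    have h2 := h r p
    rw [pdist_comm] at h2
    push_cast
    constructor <;> linarith

theorem al_le {f : Pt Q → ℝ} {B : ℝ} (hB : ∀ p, |f p| ≤ B) (n : ℕ) : |al f n| ≤ B := by
  rw [abs_le]
  constructor
  · calc -B = Av (n+1) (fun _ : ℕ → Fin (Q + 1) => -B) := (Av_const _ _).symm
      _ ≤ _ := Av_mono _ _ _ fun t => (abs_le.1 (hB _)).1
  · calc _ ≤ Av (n+1) (fun _ : ℕ → Fin (Q + 1) => B) := Av_mono _ _ _ fun t => (abs_le.1 (hB _)).2
      _ = B := (Av_const _ _)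

theorem be_le {f : Pt Q → ℝ} {B : ℝ} (hB : ∀ p, |f p| ≤ B) (n : ℕ) : |be f n| ≤ B := by
  rw [abs_le]
  constructor
  · calc -B = Av (n+1) (fun _ : ℕ → Fin (Q + 1) => -B) := (Av_const _ _).symm
      _ ≤ _ := Av_mono _ _ _ fun t => (abs_le.1 (hB _)).1
  · calc _ ≤ Av (n+1) (fun _ : ℕ → Fin (Q + 1) => B) := Av_mono _ _ _ fun t => (abs_le.1 (hB _)).2
      _ = B := (Av_const _ _)

theorem exists_G {f : Pt Q → ℝ} (hf : LipschitzWith 1 f) (hB : ∀ p, |f p| ≤ 4)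
    (I J : Finset ℕ) (hIJ : ∀ i ∈ I, ∀ j ∈ J, i < j) (t : ℕ → Fin (Q + 1)) (c : Fin (Q + 1)) :
    ∃ g : ℝ, |g| ≤ 4 ∧ (∀ m ∈ I, t m = c → f (Pt.X m (tr m t)) ≤ g + 1) ∧
      (∀ n ∈ J, t n = c → g ≤ f (Pt.Y n (tr n t))) := by
  by_cases h : (J.filter (fun n => t n = c)).Nonempty
  · obtain ⟨n, hn, hmin⟩ := Finset.exists_min_image _ (fun n => f (Pt.Y n (tr n t))) h
    rw [Finset.mem_filter] at hn
    refine ⟨f (Pt.Y n (tr n t)), hB _, fun m hm hmc => ?_, fun n' hn' hc => ?_⟩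
    · have h1 := lip_iff.1 hf (Pt.X m (tr m t)) (Pt.Y n (tr n t))
      have h2 := adj_tr (hIJ m hm n hn.1) t (hmc.trans hn.2.symm)
      simp only [pdist, if_pos h2] at h1
      linarith
    · exact hmin n' (Finset.mem_filter.2 ⟨hn', hc⟩)
  · refine ⟨4, by norm_num, fun m _ _ => ?_, fun n hn hc => ?_⟩
    · have := (abs_le.1 (hB (Pt.X m (tr m t)))).2
      linarith
    · exact absurd ⟨n, Finset.mem_filter.2 ⟨hn, hc⟩⟩ h

theorem key {f : Pt Q → ℝ} (hf : LipschitzWith 1 f) (hB : ∀ p, |f p| ≤ 4)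
    (I J : Finset ℕ) (hIJ : ∀ i ∈ I, ∀ j ∈ J, i < j) (L : ℕ) (hI : I.card = L) (hJ : J.card = L)
    (δ : ℝ) (hδ : 0 < δ) :
    ∑ m ∈ I, al f m - ∑ n ∈ J, be f n ≤ L + ((Q : ℝ) + 1) * (16 * δ + δ⁻¹ * (2 * L)) := by
  classical
  obtain ⟨K, hK⟩ : ∃ K, ∀ i ∈ I ∪ J, i < K := by
    refine ⟨(I ∪ J).sup id + 1, fun i hi => Nat.lt_succ_of_le (Finset.le_sup (f := id) hi)⟩
  have hdisj : Disjoint I J := Finset.disjoint_left.2 fun i hi hj => (hIJ i hi i hj).false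
  choose G hG1 hG2 hG3 using exists_G hf hB I J hIJ
  let w : ℕ → ℝ := fun i => (if i ∈ I then 1 else 0) - (if i ∈ J then 1 else 0)
  let u : Fin (Q + 1) → Fin (Q + 1) → ℝ := fun c d => (if d = c then 1 else 0) - ((Q : ℝ) + 1)⁻¹
  let P : Fin (Q + 1) → (ℕ → Fin (Q + 1)) → ℝ :=
    fun c t => ∑ i ∈ Finset.range K, w i * u c (t i)
  have hIs : I ⊆ Finset.range K := fun i hi => Finset.mem_range.2 (hK i (Finset.mem_union_left _ hi))
  have hJs : J ⊆ Finset.range K := fun i hi => Finset.mem_range.2 (hK i (Finset.mem_union_right _ hi))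
  have hsum : ∀ g : ℕ → ℝ, ∑ i ∈ Finset.range K, w i * g i = ∑ i ∈ I, g i - ∑ i ∈ J, g i := by
    intro g
    simp only [w, sub_mul, ite_mul, one_mul, zero_mul, Finset.sum_sub_distrib]
    rw [← Finset.sum_filter, ← Finset.sum_filter, Finset.filter_mem_eq_inter,
      Finset.filter_mem_eq_inter, Finset.inter_eq_right.2 hIs, Finset.inter_eq_right.2 hJs]
  have hw2 : ∑ i ∈ Finset.range K, (w i) ^ 2 ≤ 2 * L := by
    have : ∀ i, w i ^ 2 = w i * w i := fun i => sq _
    simp only [this]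
    rw [hsum w]
    have h1 : ∑ i ∈ I, w i ≤ ∑ i ∈ I, 1 := Finset.sum_le_sum fun i _ => by
      simp only [w]; split_ifs <;> norm_num
    have h2 : ∑ i ∈ J, (-1 : ℝ) ≤ ∑ i ∈ J, w i := Finset.sum_le_sum fun i _ => by
      simp only [w]; split_ifs <;> norm_num
    simp [hI, hJ] at h1 h2
    linarith
  have hq : (0 : ℝ) < (Q : ℝ) + 1 := by positivity
  have hq1 : ((Q : ℝ) + 1)⁻¹ ≤ 1 := inv_le_one_of_one_le₀ (by
    have : (0 : ℝ) ≤ Q := Nat.cast_nonneg _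
    linarith)
  have hq0 : 0 < ((Q : ℝ) + 1)⁻¹ := by positivity
  have hP2 : ∀ c, Av K (fun t => P c t ^ 2) ≤ 2 * L := by
    intro c
    refine le_trans (Av_sq w (u c) ?_ ?_ K) hw2
    · simp only [u, Finset.sum_sub_distrib]
      simp
      rw [mul_inv_cancel₀ hq.ne', sub_self]
    · intro d
      simp only [u]
      rw [abs_le]
      split_ifs <;> constructor <;> linarith
  have hP : ∀ c t, P c t = ∑ i ∈ I, (if t i = c then (1 : ℝ) else 0)
      - ∑ i ∈ J, (if t i = c then (1 : ℝ) else 0) := by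
    intro c t
    simp only [P]
    rw [hsum (fun i => u c (t i))]
    simp only [u, Finset.sum_sub_distrib, Finset.sum_const, hI, hJ]
    ring
  have pt : ∀ t, ∑ m ∈ I, f (Pt.X m (tr m t)) + (-1 : ℝ) • ∑ n ∈ J, f (Pt.Y n (tr n t)) ≤
      (L : ℝ) + ∑ c, (16 * δ + δ⁻¹ • P c t ^ 2) := by
    intro t
    have h1 : ∑ m ∈ I, f (Pt.X m (tr m t)) ≤ ∑ m ∈ I, (G t (t m) + 1) :=
      Finset.sum_le_sum fun m hm => hG2 t _ m hm rfl
    have h2 : ∑ n ∈ J, G t (t n) ≤ ∑ n ∈ J, f (Pt.Y n (tr n t)) :=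
      Finset.sum_le_sum fun m hm => hG3 t _ m hm rfl
    have h3 : ∑ c, G t c * P c t = ∑ m ∈ I, G t (t m) - ∑ n ∈ J, G t (t n) := by
      simp only [hP, mul_sub, Finset.sum_sub_distrib, Finset.mul_sum]
      rw [Finset.sum_comm, Finset.sum_comm (t := J)]
      simp
    have h4 : ∑ c, G t c * P c t ≤ ∑ c, (16 * δ + δ⁻¹ • P c t ^ 2) := by
      apply Finset.sum_le_sum
      intro c _
      have hg : (G t c) ^ 2 ≤ 16 := by
        have := sq_le_sq' (abs_le.1 (hG1 t c)).1 (abs_le.1 (hG1 t c)).2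
        linarith
      rw [smul_eq_mul]
      have e : δ⁻¹ * P c t ^ 2 = δ * (δ⁻¹ * P c t) ^ 2 := by field_simp
      have e2 : G t c * P c t = δ * (G t c * (δ⁻¹ * P c t)) := by field_simp
      rw [e, e2]
      have : 0 ≤ δ * (16 + (δ⁻¹ * P c t) ^ 2 - G t c * (δ⁻¹ * P c t)) := by
        apply mul_nonneg hδ.le
        nlinarith [sq_nonneg (G t c - (δ⁻¹ * P c t)), sq_nonneg (G t c), sq_nonneg (δ⁻¹ * P c t)]
      linarith
    rw [Finset.sum_add_distrib] at h1
    simp [hI] at h1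
    rw [smul_eq_mul]
    linarith
  have hA := Av_mono K _ _ pt
  rw [Av_add, Av_add, Av_smul, Av_const, Av_sum, Av_sum, Av_sum] at hA
  simp only [Av_add, Av_smul, Av_const] at hA
  have hx : ∑ m ∈ I, Av K (fun t => f (Pt.X m (tr m t))) = ∑ m ∈ I, al f m := by
    apply Finset.sum_congr rfl
    intro m hm
    exact Av_stab _ _ (hK m (Finset.mem_union_left _ hm)) _ fun t k c h => by
      rw [tr_update _ _ _ _ h]
  have hy : ∑ m ∈ J, Av K (fun t => f (Pt.Y m (tr m t))) = ∑ m ∈ J, be f m := by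
    apply Finset.sum_congr rfl
    intro m hm
    exact Av_stab _ _ (hK m (Finset.mem_union_right _ hm)) _ fun t k c h => by
      rw [tr_update _ _ _ _ h]
  rw [hx, hy] at hA
  have h5 : ∑ c : Fin (Q + 1), (16 * δ + δ⁻¹ • Av K (fun t => P c t ^ 2)) ≤
      ∑ c : Fin (Q + 1), (16 * δ + δ⁻¹ * (2 * L)) := by
    apply Finset.sum_le_sum
    intro c _
    have := mul_le_mul_of_nonneg_left (hP2 c) (inv_pos.2 hδ).le
    rw [smul_eq_mul]; linarith
  rw [Finset.sum_const, Finset.card_univ, Fintype.card_fin, nsmul_eq_mul] at h5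
  push_cast at h5
  rw [smul_eq_mul] at hA
  linarith

theorem ev_le {f : Pt Q → ℝ} (hf : LipschitzWith 1 f) (hB : ∀ p, |f p| ≤ 4) (ε : ℝ) (hε : 0 < ε) :
    ∀ᶠ n in atTop, al f n - be f n ≤ 1 + ε := by
  by_contra hcon
  rw [not_eventually] at hcon
  obtain ⟨φ, hφ, hφ2⟩ := extraction_of_frequently_atTop hcon
  have hbd : Bornology.IsBounded (Metric.closedBall (0 : ℝ × ℝ) 4) := Metric.isBounded_closedBall
  obtain ⟨⟨a, b⟩, -, ψ, hψ, hlim⟩ := tendsto_subseq_of_bounded hbd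
    (x := fun n => (al f (φ n), be f (φ n))) (by
      intro n
      rw [mem_closedBall_zero_iff, Prod.norm_def]
      exact max_le (al_le hB _) (be_le hB _))
  have ha : Tendsto (fun n => al f (φ (ψ n))) atTop (𝓝 a) :=
    (continuous_fst.tendsto _).comp hlim
  have hb : Tendsto (fun n => be f (φ (ψ n))) atTop (𝓝 b) :=
    (continuous_snd.tendsto _).comp hlim
  have hab : 1 + ε ≤ a - b := by
    refine ge_of_tendsto' (ha.sub hb) fun n => ?_
    have := hφ2 (ψ n)
    push Not at this
    exact this.le
  have e1 : ∀ᶠ n in atTop, a - ε / 4 < al f (φ (ψ n)) := ha.eventually (lt_mem_nhds (by linarith))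
  have e2 : ∀ᶠ n in atTop, be f (φ (ψ n)) < b + ε / 4 := hb.eventually (gt_mem_nhds (by linarith))
  obtain ⟨N, hN⟩ := eventually_atTop.1 (e1.and e2)
  have hmono : StrictMono (fun n => φ (ψ n)) := hφ.comp hψ
  obtain ⟨R, hR⟩ := exists_nat_gt (((Q : ℝ) + 1) * 18 / (ε / 2))
  have hR0 : (0 : ℝ) < R := lt_of_le_of_lt (by positivity) hR
  let L := R ^ 2
  let I := (Finset.Ico N (N + L)).image (fun n => φ (ψ n))
  let J := (Finset.Ico (N + L) (N + L + L)).image (fun n => φ (ψ n))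
  have hk := key hf hB I J (by
    intro i hi j hj
    simp only [I, J, Finset.mem_image, Finset.mem_Ico] at hi hj
    obtain ⟨i', hi', rfl⟩ := hi
    obtain ⟨j', hj', rfl⟩ := hj
    exact hmono (by omega)) L (by
      rw [Finset.card_image_of_injective _ hmono.injective]; simp) (by
      rw [Finset.card_image_of_injective _ hmono.injective]; simp) R hR0
  rw [Finset.sum_image hmono.injective.injOn, Finset.sum_image hmono.injective.injOn] at hk
  have s1 : ∑ i ∈ Finset.Ico N (N + L), (a - ε / 4) ≤
      ∑ i ∈ Finset.Ico N (N + L), al f (φ (ψ i)) :=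
    Finset.sum_le_sum fun i hi => (hN i (Finset.mem_Ico.1 hi).1).1.le
  have s2 : ∑ i ∈ Finset.Ico (N + L) (N + L + L), be f (φ (ψ i)) ≤
      ∑ i ∈ Finset.Ico (N + L) (N + L + L), (b + ε / 4) :=
    Finset.sum_le_sum fun i hi => (hN i (by have := (Finset.mem_Ico.1 hi).1; omega)).2.le
  rw [Finset.sum_const, Nat.card_Ico, Nat.add_sub_cancel_left, nsmul_eq_mul] at s1 s2
  have hL : (L : ℝ) = (R : ℝ) * R := by simp [L, sq]
  have hinv : (R : ℝ)⁻¹ * (2 * L) = 2 * R := by rw [hL]; field_simp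
  rw [hinv] at hk
  rw [div_lt_iff₀ (by positivity)] at hR
  have hL0 : (0 : ℝ) ≤ L := Nat.cast_nonneg _
  have h6 : (L : ℝ) * (1 + ε / 2) ≤ L * (a - ε / 4 - (b + ε / 4)) :=
    mul_le_mul_of_nonneg_left (by linarith) hL0
  have h7 := mul_lt_mul_of_pos_right hR hR0
  have h8 : (L : ℝ) * (a - ε / 4) - L * (b + ε / 4) ≤ L + ((Q : ℝ) + 1) * (16 * R + 2 * R) := by
    linarith
  rw [hL] at h6 h8
  linarith

theorem abs_le_four {f : Pt Q → ℝ} (hf : LipschitzWith 1 f) {z : Pt Q} (hz : f z = 0) (p : Pt Q) :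
    |f p| ≤ 4 := by
  have h1 := lip_iff.1 hf p z
  have h2 := lip_iff.1 hf z p
  have h3 := pdist_le p z
  have h4 := pdist_le z p
  rw [abs_le]; constructor <;> linarith

theorem ev_abs {f : Pt Q → ℝ} (hf : LipschitzWith 1 f) (hB : ∀ p, |f p| ≤ 4) (ε : ℝ) (hε : 0 < ε) :
    ∀ᶠ n in atTop, |pr f (mu n)| ≤ 1 + ε := by
  have h1 := ev_le hf hB ε hε
  have h2 := ev_le (f := fun p => - f p) hf.neg (by simpa using hB) ε hε
  filter_upwards [h1, h2] with n h1 h2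
  have e : ∀ n, pr (fun p => - f p) (mu n) = - pr f (mu n) := by
    intro n
    rw [← pr_eq, ← pr_eq]; simp
  rw [← pr_mu] at h1 h2
  rw [e] at h2
  rw [abs_le]; constructor <;> linarith

theorem pr_mu_le {f : Pt Q → ℝ} (hf : LipschitzWith 1 f) {z : Pt Q} (hz : f z = 0) (n : ℕ) :
    |pr f (mu n)| ≤ 8 := by
  rw [pr_mu]
  have h1 := abs_le.1 (al_le (abs_le_four hf hz) n)
  have h2 := abs_le.1 (be_le (abs_le_four hf hz) n)
  rw [abs_le]; constructor <;> linarith [h1.1, h1.2, h2.1, h2.2]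

theorem pr_diff_le {f : Pt Q → ℝ} (hf : LipschitzWith 1 f) {z : Pt Q} (hz : f z = 0) (k l : ℕ) :
    |pr f (mu k - mu l)| ≤ 16 := by
  rw [map_sub]
  have h1 := abs_le.1 (pr_mu_le hf hz k)
  have h2 := abs_le.1 (pr_mu_le hf hz l)
  rw [abs_le]; constructor <;> linarith [h1.1, h1.2, h2.1, h2.2]

theorem freeNorm_le (z : Pt Q) (n : ℕ) : freeNorm z (mu n : Pt Q →₀ ℝ) ≤ 8 := by
  apply Real.sSup_le _ (by norm_num)
  rintro s ⟨f, hz, hf, rfl⟩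
  rw [pr_eq]
  exact (abs_le.1 (pr_mu_le hf hz n)).2

theorem freeNorm_diff_le (z : Pt Q) (k l : ℕ) : freeNorm z (mu k - mu l : Pt Q →₀ ℝ) ≤ 16 := by
  apply Real.sSup_le _ (by norm_num)
  rintro s ⟨f, hz, hf, rfl⟩
  rw [pr_eq]
  exact (abs_le.1 (pr_diff_le hf hz k l)).2

theorem seqDe_le (z : Pt Q) : seqDe z (mu : ℕ → Pt Q →₀ ℝ) ≤ 2 := by
  apply Real.sSup_le _ (by norm_num)
  rintro t ⟨f, hz, hf, rfl⟩
  apply le_of_forall_pos_le_add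
  intro ε hε
  obtain ⟨N, hN⟩ := eventually_atTop.1 (ev_abs hf (abs_le_four hf hz) (ε / 2) (by linarith))
  refine le_trans (csInf_le ?_ (Set.mem_ofPred.2 ⟨N, rfl⟩)) ?_
  · refine ⟨0, ?_⟩
    rintro u ⟨n, rfl⟩
    apply Real.sSup_nonneg
    rintro s ⟨k, _, l, _, rfl⟩
    exact abs_nonneg _
  · apply Real.sSup_le _ (by linarith)
    rintro s ⟨k, hk, l, hl, rfl⟩
    rw [pr_eq, map_sub]
    have h1 := abs_le.1 (hN k hk)
    have h2 := abs_le.1 (hN l hl)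
    rw [abs_le]; constructor <;> linarith [h1.1, h1.2, h2.1, h2.2]

open Classical in
noncomputable def wit (k l : ℕ) : Pt Q → ℝ
  | .X m s => if m = k then 4 else if m = l then (if s k = s l then 2 else 0) else 2
  | .Y n s => if (k < n ∧ n ≤ l) ∨ (l < n ∧ s k = s n) then 3 else 1

theorem wit_X (k l m : ℕ) (s : ℕ → Fin (Q + 1)) :
    0 ≤ wit k l (.X m s) ∧ wit k l (.X m s) ≤ 4 := by
  simp only [wit]; split_ifs <;> norm_num

theorem wit_Y (k l m : ℕ) (s : ℕ → Fin (Q + 1)) :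
    1 ≤ wit k l (.Y m s) ∧ wit k l (.Y m s) ≤ 3 := by
  simp only [wit]; split_ifs <;> norm_num

theorem wit_adj {k l : ℕ} (hkl : k < l) {m n : ℕ} {s s' : ℕ → Fin (Q + 1)} (h : Adj m s n s') :
    |wit k l (.X m s) - wit k l (.Y n s')| ≤ 1 := by
  obtain ⟨h1, h2, h3⟩ := h
  simp only [wit]
  by_cases hm : m = k
  · subst hm
    rw [if_pos rfl, if_pos]
    · norm_num
    · by_cases hn : n ≤ l
      · exact Or.inl ⟨h1, hn⟩
      · exact Or.inr ⟨by omega, by rw [← h2 m le_rfl, h3]⟩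
  · rw [if_neg hm]
    by_cases hl : m = l
    · subst hl
      rw [if_pos rfl]
      by_cases he : s k = s m
      · rw [if_pos he]; split_ifs <;> norm_num
      · rw [if_neg he, if_neg]
        · norm_num
        · rintro (⟨_, h⟩ | ⟨_, h⟩)
          · omega
          · rw [← h2 k hkl.le, ← h3] at h
            exact he h
    · rw [if_neg hl]; split_ifs <;> norm_num

theorem wit_lip {k l : ℕ} (hkl : k < l) : LipschitzWith 1 (wit k l : Pt Q → ℝ) := by
  rw [lip_iff]
  intro p r
  by_cases hpr : p = r
  · subst hpr; rw [pdist_self]; simp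
  rcases p with ⟨m, s⟩ | ⟨m, s⟩ <;> rcases r with ⟨n, s'⟩ | ⟨n, s'⟩
  · have h1 := wit_X k l m s
    have h2 := wit_X k l n s'
    simp only [Pt.X.injEq] at hpr
    simp only [pdist, if_neg hpr]
    split_ifs with h
    · obtain ⟨i, r, ha, hb⟩ := h
      have h3 := abs_le.1 (wit_adj hkl ha)
      have h4 := abs_le.1 (wit_adj hkl hb)
      linarith [h3.2, h4.1]
    · linarith [h1.2, h2.1]
  · have h1 := wit_X k l m s
    have h2 := wit_Y k l n s'
    simp only [pdist]
    split_ifs with h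
    · exact (abs_le.1 (wit_adj hkl h)).2
    · linarith [h1.2, h2.1]
  · have h1 := wit_Y k l m s
    have h2 := wit_X k l n s'
    simp only [pdist]
    split_ifs with h
    · linarith [(abs_le.1 (wit_adj hkl h)).1]
    · linarith [h1.2, h2.1]
  · have h1 := wit_Y k l m s
    have h2 := wit_Y k l n s'
    simp only [Pt.Y.injEq] at hpr
    simp only [pdist, if_neg hpr]
    linarith [h1.2, h2.1]

theorem wit_val {k l : ℕ} (hkl : k < l) :
    pr (wit k l : Pt Q → ℝ) (mu k - mu l) = 6 - 2 * ((Q : ℝ) + 1)⁻¹ := by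
  rw [map_sub, pr_mu, pr_mu]
  have h1 : al (wit k l : Pt Q → ℝ) k = 4 := by
    simp [al, wit, Av_const]
  have h2 : be (wit k l : Pt Q → ℝ) k = 1 := by
    simp [be, wit, hkl.not_gt, Av_const]
  have h3 : be (wit k l : Pt Q → ℝ) l = 3 := by
    simp [be, wit, hkl, Av_const]
  have h4 : al (wit k l : Pt Q → ℝ) l = 2 * ((Q : ℝ) + 1)⁻¹ := by
    simp only [al, wit, if_neg hkl.ne', if_true, tr, hkl.le, le_refl, Av]
    simp only [Function.update_self, Function.update_of_ne hkl.ne]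
    rw [← Av_sum]
    simp [Av_const, mul_comm]
  rw [h1, h2, h3, h4]; ring

theorem le_freeNorm (z : Pt Q) {k l : ℕ} (hkl : k < l) :
    6 - 2 * ((Q : ℝ) + 1)⁻¹ ≤ freeNorm z (mu k - mu l : Pt Q →₀ ℝ) := by
  have hlip : LipschitzWith 1 (fun p : Pt Q => wit k l p - wit k l z) := by
    rw [lip_iff]
    intro p r
    have := lip_iff.1 (wit_lip (Q := Q) hkl) p r
    linarith
  refine le_csSup ⟨16, ?_⟩ ⟨fun p => wit k l p - wit k l z, sub_self _, hlip, ?_⟩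
  · rintro s ⟨f, hz, hf, rfl⟩
    rw [pr_eq]
    exact (abs_le.1 (pr_diff_le hf hz k l)).2
  · rw [pr_eq, ← wit_val hkl, map_sub, map_sub, pr_mu, pr_mu, pr_mu, pr_mu]
    have ha : ∀ n, al (fun p : Pt Q => wit k l p - wit k l z) n = al (wit k l : Pt Q → ℝ) n - wit k l z := by
      intro n
      simp only [al, sub_eq_add_neg]
      rw [Av_add, Av_const]
    have hb : ∀ n, be (fun p : Pt Q => wit k l p - wit k l z) n = be (wit k l : Pt Q → ℝ) n - wit k l z := by
      intro n
      simp only [be, sub_eq_add_neg]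
      rw [Av_add, Av_const]
    simp only [ha, hb]; ring

theorem le_seqCa (z : Pt Q) : 6 - 2 * ((Q : ℝ) + 1)⁻¹ ≤ seqCa z (mu : ℕ → Pt Q →₀ ℝ) := by
  refine le_csInf ⟨_, Set.mem_ofPred.2 ⟨0, rfl⟩⟩ ?_
  rintro t ⟨n, rfl⟩
  refine (le_freeNorm z (Nat.lt_succ_self n)).trans (le_csSup ⟨16, ?_⟩ ?_)
  · rintro s ⟨k, _, l, _, rfl⟩
    exact freeNorm_diff_le z k l
  · exact ⟨n, le_rfl, n + 1, Nat.le_succ n, rfl⟩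

end Schur3

/-- The constant `3` is optimal: for every `1 ≤ c < 3` there is a uniformly discrete
pointed metric space and a bounded sequence in its Lipschitz-free space witnessing
that the space is not `c`-Schur. -/
theorem exists_uniformlyDiscrete_not_cSchur (c : ℝ) (hc1 : 1 ≤ c) (hc3 : c < 3) :
    ∃ (M : Type) (_ : MetricSpace M) (z : M),
      (∃ θ : ℝ, 0 < θ ∧ ∀ x y : M, x ≠ y → θ ≤ dist x y) ∧
      ∃ μ : ℕ → M →₀ ℝ, (∃ C : ℝ, ∀ n, freeNorm z (μ n) ≤ C) ∧
        c * seqDe z μ < seqCa z μ := by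
  obtain ⟨Q, hQ⟩ := exists_nat_gt ((3 - c)⁻¹)
  have h3 : 0 < 3 - c := by linarith
  refine ⟨Schur3.Pt Q, inferInstance, Schur3.Pt.X 0 0, ⟨1, one_pos, fun x y h =>
    Schur3.one_le_pdist h⟩, Schur3.mu, ⟨8, Schur3.freeNorm_le _⟩, ?_⟩
  have h1 := Schur3.seqDe_le (Schur3.Pt.X 0 0 : Schur3.Pt Q)
  have h2 := Schur3.le_seqCa (Schur3.Pt.X 0 0 : Schur3.Pt Q)
  have h4 : ((Q : ℝ) + 1)⁻¹ < 3 - c := by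
    rw [inv_lt_comm₀ (by positivity) h3]; linarith
  nlinarith
end
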